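/- For every infinite binary sequence x ∈ B^ℕ, 2·β̲(x) ≤ h̲(x) ≤ H(β̲(x)). -/

import Mathlib

open Filter Topology

/-- The factor of length `len` of the sequence `x` starting at position `i`. -/
def factor (x : ℕ → Bool) (i len : ℕ) : List Bool :=
  List.ofFn (fun j : Fin len => x (i + j))

/-- Number of (possibly overlapping) occurrences of the word `u`
in the prefix `x[0:n)` of the sequence `x`. -/
def occ (x : ℕ → Bool) (n : ℕ) (u : List Bool) : ℕ :=
  ((Finset.range (n + 1 - u.length)).filter (fun i => factor x i u.length = u)).card

/-- Non-aligned `ℓ`-block entropy of the prefix `x[0:n)`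
(logs are base 2, with the convention `0 · log 0 = 0`). -/
noncomputable def hBlock (ℓ : ℕ) (x : ℕ → Bool) (n : ℕ) : ℝ :=
  -(1 / (ℓ : ℝ)) * ∑ u : Fin ℓ → Bool,
    ((occ x n (List.ofFn u) : ℝ) / ((n : ℝ) - ℓ + 1)) *
      Real.logb 2 ((occ x n (List.ofFn u) : ℝ) / ((n : ℝ) - ℓ + 1))

/-- `h̲(x) = lim_{ℓ→∞} liminf_{n→∞} h_ℓ(x[0:n))` (the limit in `ℓ` exists). -/
noncomputable def hLow (x : ℕ → Bool) : ℝ :=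
  atTop.liminf fun ℓ => atTop.liminf fun n => hBlock ℓ x n

/-- `h̄(x) = lim_{ℓ→∞} limsup_{n→∞} h_ℓ(x[0:n))` (the limit in `ℓ` exists). -/
noncomputable def hUp (x : ℕ → Bool) : ℝ :=
  atTop.limsup fun ℓ => atTop.limsup fun n => hBlock ℓ x n

/-- `γ_ℓ(x[0:n))`: normalized minimal number of prediction errors when predicting
`x[i]` from the preceding `ℓ` symbols `x[i-ℓ:i)`, for `i ∈ {ℓ,…,n-1}`. -/
noncomputable def gammaWord (ℓ : ℕ) (x : ℕ → Bool) (n : ℕ) : ℝ :=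
  (1 / ((n : ℝ) - ℓ)) *
    ((Finset.univ : Finset ((Fin ℓ → Bool) → Bool)).inf' Finset.univ_nonempty
      (fun f => ((((Finset.Ico ℓ n).filter
        (fun i => x i ≠ f (fun j => x (i - ℓ + j)))).card : ℝ))))

/-- `β_ℓ(x[0:n))`: normalized minimal number of prediction errors when predicting
`x[i]` from the following `ℓ` symbols `x[i+1:i+ℓ+1)`, for `i ∈ {0,…,n-ℓ-1}`. -/
noncomputable def betaWord (ℓ : ℕ) (x : ℕ → Bool) (n : ℕ) : ℝ :=
  (1 / ((n : ℝ) - ℓ)) *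
    ((Finset.univ : Finset ((Fin ℓ → Bool) → Bool)).inf' Finset.univ_nonempty
      (fun f => ((((Finset.range (n - ℓ)).filter
        (fun i => x i ≠ f (fun j => x (i + 1 + j)))).card : ℝ))))

/-- `γ̲(x) = lim_{ℓ→∞} liminf_{n→∞} γ_ℓ(x[0:n))` (the limit in `ℓ` exists, by monotonicity). -/
noncomputable def gammaLow (x : ℕ → Bool) : ℝ :=
  atTop.liminf fun ℓ => atTop.liminf fun n => gammaWord ℓ x n

/-- `γ̄(x) = lim_{ℓ→∞} limsup_{n→∞} γ_ℓ(x[0:n))` (the limit in `ℓ` exists, by monotonicity). -/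
noncomputable def gammaUp (x : ℕ → Bool) : ℝ :=
  atTop.limsup fun ℓ => atTop.limsup fun n => gammaWord ℓ x n

/-- `β̲(x) = lim_{ℓ→∞} liminf_{n→∞} β_ℓ(x[0:n))` (the limit in `ℓ` exists, by monotonicity). -/
noncomputable def betaLow (x : ℕ → Bool) : ℝ :=
  atTop.liminf fun ℓ => atTop.liminf fun n => betaWord ℓ x n

/-- `β̄(x) = lim_{ℓ→∞} limsup_{n→∞} β_ℓ(x[0:n))` (the limit in `ℓ` exists, by monotonicity). -/
noncomputable def betaUp (x : ℕ → Bool) : ℝ :=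
  atTop.limsup fun ℓ => atTop.limsup fun n => betaWord ℓ x n

/-- Binary Shannon entropy function `H(α) = -α log α - (1-α) log (1-α)` (base-2 logs). -/
noncomputable def binEntropy (a : ℝ) : ℝ :=
  -(a * Real.logb 2 a) - (1 - a) * Real.logb 2 (1 - a)

/-- Conditional block entropy `Hc^{n,ℓ}(x)`:
`-Σ_{ā ∈ B^ℓ, a ∈ B, p(ā·a) > 0} p(ā·a) · log (p(ā·a)/p(ā))`, where
`p(ā) = occ(x[0:n-1), ā)/(n-ℓ)` and `p(ā·a) = occ(x[0:n), ā·a)/(n-ℓ)`. -/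
noncomputable def condEntropy (ℓ : ℕ) (x : ℕ → Bool) (n : ℕ) : ℝ :=
  -∑ u : Fin ℓ → Bool, ∑ a : Bool,
    (if 0 < ((occ x n (List.ofFn u ++ [a]) : ℝ) / ((n : ℝ) - ℓ)) then
      ((occ x n (List.ofFn u ++ [a]) : ℝ) / ((n : ℝ) - ℓ)) *
        Real.logb 2 (((occ x n (List.ofFn u ++ [a]) : ℝ) / ((n : ℝ) - ℓ)) /
          ((occ x (n - 1) (List.ofFn u) : ℝ) / ((n : ℝ) - ℓ)))
    else 0)

/-- The real number in `[0,1]` denoted by the binary sequence `x`. -/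
noncomputable def val (x : ℕ → Bool) : ℝ :=
  ∑' n : ℕ, (if x n then (1 : ℝ) else 0) / 2 ^ (n + 1)

/-!
Let `Dₖ` be the conditional entropy of a symbol given the `k` symbols that follow it. For each value
of these symbols the error probability of the best guess is at most half its binary entropy, so
`2βₖ ≤ Dₖ`, and Jensen's inequality gives `Dₖ ≤ H(βₖ)` (Fano). By the chain rule the normalized
block entropy `h_ℓ` is, up to boundary effects that vanish as `n → ∞`, the mean of `D₀, …, D_{ℓ-1}`.
Since `βₖ` decreases in `k`, this mean is at least `2β_ℓ` and at most `m/ℓ + H(β_m)` for every `m`.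
Take lower limits in `n`, then let `ℓ → ∞`, then `m → ∞`.
-/

section Liminf

variable {ι R : Type*} {F : Filter ι}

theorem isBoundedUnder_ge_of_mem_Icc [Preorder R] {u : ι → R} {a b : R}
    (hu : ∀ᶠ i in F, u i ∈ Set.Icc a b) : F.IsBoundedUnder (· ≥ ·) u :=
  isBoundedUnder_of_eventually_ge (hu.mono fun _ h => h.1)

theorem isCoboundedUnder_ge_of_mem_Icc [Preorder R] [F.NeBot] {u : ι → R} {a b : R}
    (hu : ∀ᶠ i in F, u i ∈ Set.Icc a b) : F.IsCoboundedUnder (· ≥ ·) u :=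
  isCoboundedUnder_ge_of_eventually_le F (hu.mono fun _ h => h.2)

theorem liminf_mem_Icc [ConditionallyCompleteLinearOrder R] [F.NeBot] {u : ι → R} {a b : R}
    (hu : ∀ᶠ i in F, u i ∈ Set.Icc a b) : F.liminf u ∈ Set.Icc a b :=
  ⟨le_liminf_of_le (isCoboundedUnder_ge_of_mem_Icc hu) (hu.mono fun _ h => h.1),
    liminf_le_of_frequently_le (hu.mono fun _ h => h.2).frequently
      (isBoundedUnder_ge_of_mem_Icc hu)⟩

theorem map_liminf_of_monotoneOn_Icc {S : Type*} [F.NeBot]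
    [ConditionallyCompleteLinearOrder R] [TopologicalSpace R] [OrderTopology R]
    [ConditionallyCompleteLinearOrder S] [TopologicalSpace S] [OrderTopology S]
    {f : R → S} {u : ι → R} {a b : R} (hf : MonotoneOn f (Set.Icc a b))
    (hf' : ContinuousOn f (Set.Icc a b)) (hu : ∀ᶠ i in F, u i ∈ Set.Icc a b) :
    f (F.liminf u) = F.liminf fun i => f (u i) := by
  obtain ⟨i, hi⟩ := hu.exists
  have hab : a ≤ b := hi.1.trans hi.2
  let g := Set.IccExtend hab ((Set.Icc a b).domRestrict f)
  have g_eq {t : R} (ht : t ∈ Set.Icc a b) : g t = f t := Set.IccExtend_of_mem hab _ ht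
  have g_mono : Monotone g := Monotone.IccExtend hab (Set.monotoneOn_iff_monotone.1 hf)
  have g_cont : Continuous g := hf'.domRestrict.Icc_extend'
  calc f (F.liminf u) = g (F.liminf u) := (g_eq (liminf_mem_Icc hu)).symm
    _ = F.liminf (g ∘ u) := g_mono.map_liminf_of_continuousAt u g_cont.continuousAt
        (isCoboundedUnder_ge_of_mem_Icc hu) (isBoundedUnder_ge_of_mem_Icc hu)
    _ = F.liminf fun i => f (u i) := liminf_congr (hu.mono fun _ h => g_eq h)

theorem liminf_eq_of_tendsto_sub_zero [F.NeBot] {u v : ι → ℝ} {a b : ℝ}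
    (hv : ∀ᶠ i in F, v i ∈ Set.Icc a b) (h : Tendsto (fun i => u i - v i) F (𝓝 0)) :
    F.liminf u = F.liminf v := by
  have hu : ∀ᶠ i in F, u i ∈ Set.Icc (a - 1) (b + 1) := by
    filter_upwards [hv, h.eventually (Icc_mem_nhds neg_one_lt_zero one_pos)] with i hvi hi
    exact ⟨by linarith [hvi.1, hi.1], by linarith [hvi.2, hi.2]⟩
  have liminf_le {u v : ι → ℝ} {a b : ℝ} (hv : ∀ᶠ i in F, v i ∈ Set.Icc a b)
      (h : Tendsto (fun i => u i - v i) F (𝓝 0)) : F.liminf v ≤ F.liminf u := by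
    have := le_liminf_add h.isBoundedUnder_ge h.isBoundedUnder_le
      (isBoundedUnder_ge_of_mem_Icc hv) (isCoboundedUnder_ge_of_mem_Icc hv)
    simpa [h.liminf_eq, Pi.add_def] using this
  exact (liminf_le hu (by simpa using h.neg)).antisymm (liminf_le hv h)

end Liminf

theorem tendsto_sub_zero_of_continuousOn_of_isCompact {ι E G : Type*} {F : Filter ι}
    [SeminormedAddCommGroup E] [SeminormedAddCommGroup G] {f : E → G} {K : Set E} {u v : ι → E}
    (hf : ContinuousOn f K) (hK : IsCompact K) (hu : ∀ᶠ i in F, u i ∈ K)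
    (hv : ∀ᶠ i in F, v i ∈ K) (h : Tendsto (fun i => u i - v i) F (𝓝 0)) :
    Tendsto (fun i => f (u i) - f (v i)) F (𝓝 0) := by
  have unif := Metric.uniformContinuousOn_iff.1 (hK.uniformContinuousOn_of_continuous hf)
  refine Metric.tendsto_nhds.2 fun ε hε => ?_
  obtain ⟨δ, hδ, hfδ⟩ := unif ε hε
  filter_upwards [hu, hv, Metric.tendsto_nhds.1 h δ hδ] with i hui hvi hi
  rw [dist_zero_right, ← dist_eq_norm] at hi ⊢
  exact hfδ _ hui _ hvi hi

section BinEntropy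

theorem binEntropy_eq_div_log_two (a : ℝ) : binEntropy a = Real.binEntropy a / Real.log 2 := by
  rw [Real.binEntropy_eq_negMulLog_add_negMulLog_one_sub, binEntropy]
  simp only [Real.negMulLog, Real.logb]
  ring

theorem continuous_binEntropy : Continuous binEntropy := by
  rw [funext binEntropy_eq_div_log_two]
  fun_prop

theorem monotoneOn_binEntropy : MonotoneOn binEntropy (Set.Icc 0 2⁻¹) := by
  intro a ha b hb hab
  rw [binEntropy_eq_div_log_two, binEntropy_eq_div_log_two]
  gcongr
  exact Real.binEntropy_strictMonoOn.monotoneOn ha hb hab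

theorem concaveOn_binEntropy : ConcaveOn ℝ (Set.Icc 0 1) binEntropy := by
  have : binEntropy = (Real.log 2)⁻¹ • Real.binEntropy := by
    ext a
    rw [binEntropy_eq_div_log_two, Pi.smul_apply, smul_eq_mul, div_eq_inv_mul]
  rw [this]
  exact Real.strictConcave_binEntropy.concaveOn.smul (by positivity)

theorem binEntropy_le_one (a : ℝ) : binEntropy a ≤ 1 := by
  rw [binEntropy_eq_div_log_two]
  exact div_le_one_of_le₀ Real.binEntropy_le_log_two (by positivity)

theorem binEntropy_nonneg {a : ℝ} (ha : a ∈ Set.Icc 0 1) : 0 ≤ binEntropy a := by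
  rw [binEntropy_eq_div_log_two]
  exact div_nonneg (Real.binEntropy_nonneg ha.1 ha.2) (by positivity)

theorem two_mul_le_binEntropy {a : ℝ} (ha : a ∈ Set.Icc 0 2⁻¹) : 2 * a ≤ binEntropy a := by
  have zero_mem : (0 : ℝ) ∈ Set.Icc 0 1 := by simp
  have half_mem : (2⁻¹ : ℝ) ∈ Set.Icc 0 1 := by norm_num
  have weight_nonneg : 0 ≤ 1 - 2 * a := by linarith [ha.2]
  -- The chord of the concave function `H` over `[0, 1/2]` has slope `2`.
  have chord := concaveOn_binEntropy.2 zero_mem half_mem weight_nonneg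
    (mul_nonneg zero_le_two ha.1) (sub_add_cancel 1 (2 * a))
  have log_two_ne_zero : Real.log 2 ≠ 0 := (Real.log_pos one_lt_two).ne'
  have endpoint : 2 * a * 2⁻¹ = a := by ring
  simpa [binEntropy_eq_div_log_two, log_two_ne_zero, endpoint] using chord

end BinEntropy

section TwoPoints

variable {a b : ℝ}

theorem min_div_add_mem_Icc (ha : 0 ≤ a) (hb : 0 ≤ b) :
    min a b / (a + b) ∈ Set.Icc 0 2⁻¹ := by
  refine ⟨by positivity, div_le_of_le_mul₀ (by positivity) (by norm_num) ?_⟩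
  linarith [min_le_left a b, min_le_right a b]

theorem add_mul_min_div_add (ha : 0 ≤ a) (hb : 0 ≤ b) :
    (a + b) * (min a b / (a + b)) = min a b := by
  refine mul_div_cancel_of_imp' fun h => ?_
  linarith [min_le_left a b, min_le_right a b, le_min ha hb]

theorem negMulLog_add_negMulLog_sub_negMulLog_add (ha : 0 ≤ a) (hb : 0 ≤ b) :
    Real.negMulLog a + Real.negMulLog b - Real.negMulLog (a + b) =
      (a + b) * Real.binEntropy (a / (a + b)) := by
  rcases ha.eq_or_lt with rfl | ha
  · simp
  rcases hb.eq_or_lt with rfl | hb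
  · simp [ha.ne']
  have one_sub : 1 - a / (a + b) = b / (a + b) := by field_simp; ring
  rw [Real.binEntropy_eq_negMulLog_add_negMulLog_one_sub, one_sub]
  simp only [Real.negMulLog, Real.log_div ha.ne' (add_pos ha hb).ne',
    Real.log_div hb.ne' (add_pos ha hb).ne']
  field_simp
  ring

theorem negMulLog_add_negMulLog_sub_negMulLog_add_eq_min (ha : 0 ≤ a) (hb : 0 ≤ b) :
    Real.negMulLog a + Real.negMulLog b - Real.negMulLog (a + b) =
      (a + b) * Real.binEntropy (min a b / (a + b)) := by
  rcases le_total a b with h | h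
  · rw [min_eq_left h, negMulLog_add_negMulLog_sub_negMulLog_add ha hb]
  · rw [min_eq_right h, add_comm a b, ← negMulLog_add_negMulLog_sub_negMulLog_add hb ha]
    ring

end TwoPoints

section Entropy

variable {α β : Type*} [Fintype α] [Fintype β]

/-- The Shannon entropy of the weights `p`, in bits. -/
noncomputable def shannonEntropy (p : α → ℝ) : ℝ :=
  (∑ a, Real.negMulLog (p a)) / Real.log 2

/-- The conditional entropy, in bits, of the first coordinate given the second one under the
joint weights `p`, encoded through the chain rule. -/
noncomputable def condEntropyFst (p : β × α → ℝ) : ℝ :=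
  shannonEntropy p - shannonEntropy fun v => ∑ b, p (b, v)

/-- The Bayes error: the least probability of guessing a random bit wrongly from a correlated
observation, when `p` is the joint law of the bit and the observation. -/
noncomputable def bayesError (p : Bool × α → ℝ) : ℝ :=
  ∑ v, min (p (false, v)) (p (true, v))

theorem shannonEntropy_comp_equiv (e : β ≃ α) (p : α → ℝ) :
    shannonEntropy (fun b => p (e b)) = shannonEntropy p := by
  rw [shannonEntropy, shannonEntropy, e.sum_comp fun a => Real.negMulLog (p a)]

theorem shannonEntropy_eq_zero_of_unique [Unique α] {p : α → ℝ} (hp : p ∈ stdSimplex ℝ α) :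
    shannonEntropy p = 0 := by
  rw [stdSimplex_unique, Set.mem_singleton_iff] at hp
  simp [shannonEntropy, hp]

theorem continuous_shannonEntropy : Continuous (shannonEntropy : (α → ℝ) → ℝ) := by
  unfold shannonEntropy
  fun_prop

variable {p : Bool × α → ℝ}

theorem condEntropyFst_eq_sum (hp : 0 ≤ p) :
    condEntropyFst p = ∑ v, (p (false, v) + p (true, v)) *
      binEntropy (min (p (false, v)) (p (true, v)) / (p (false, v) + p (true, v))) := by
  rw [condEntropyFst, shannonEntropy, shannonEntropy, Fintype.sum_prod_type_right, ← sub_div,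
    ← Finset.sum_sub_distrib, Finset.sum_div]
  refine Finset.sum_congr rfl fun v _ => ?_
  rw [binEntropy_eq_div_log_two, ← mul_div_assoc,
    ← negMulLog_add_negMulLog_sub_negMulLog_add_eq_min (hp _) (hp _)]
  simp only [Fintype.sum_bool, add_comm]

theorem two_mul_bayesError_le_condEntropyFst (hp : 0 ≤ p) :
    2 * bayesError p ≤ condEntropyFst p := by
  rw [bayesError, condEntropyFst_eq_sum hp, Finset.mul_sum]
  refine Finset.sum_le_sum fun v _ => ?_
  rw [← add_mul_min_div_add (hp (false, v)) (hp (true, v)), mul_left_comm,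
    add_mul_min_div_add (hp (false, v)) (hp (true, v))]
  exact mul_le_mul_of_nonneg_left (two_mul_le_binEntropy (min_div_add_mem_Icc (hp _) (hp _)))
    (add_nonneg (hp _) (hp _))

theorem sum_false_add_true (p : Bool × α → ℝ) :
    ∑ v, (p (false, v) + p (true, v)) = ∑ a, p a := by
  rw [Fintype.sum_prod_type_right]
  simp only [Fintype.sum_bool, add_comm]

theorem condEntropyFst_le_binEntropy_bayesError (hp : p ∈ stdSimplex ℝ (Bool × α)) :
    condEntropyFst p ≤ binEntropy (bayesError p) := by
  have jensen := concaveOn_binEntropy.le_map_sum (t := Finset.univ)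
    (w := fun v => p (false, v) + p (true, v))
    (p := fun v => min (p (false, v)) (p (true, v)) / (p (false, v) + p (true, v)))
    (fun v _ => add_nonneg (hp.1 _) (hp.1 _)) ((sum_false_add_true p).trans hp.2)
    (fun v _ => Set.Icc_subset_Icc_right (by norm_num) (min_div_add_mem_Icc (hp.1 _) (hp.1 _)))
  simpa only [bayesError, smul_eq_mul, add_mul_min_div_add (hp.1 _) (hp.1 _),
    ← condEntropyFst_eq_sum hp.1] using jensen

theorem bayesError_mem_Icc (hp : p ∈ stdSimplex ℝ (Bool × α)) :
    bayesError p ∈ Set.Icc 0 2⁻¹ := by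
  refine ⟨Finset.sum_nonneg fun v _ => le_min (hp.1 _) (hp.1 _), ?_⟩
  calc bayesError p ≤ ∑ v, (p (false, v) + p (true, v)) / 2 := Finset.sum_le_sum fun v _ => by
        linarith [min_le_left (p (false, v)) (p (true, v)),
          min_le_right (p (false, v)) (p (true, v))]
    _ = 2⁻¹ := by rw [← Finset.sum_div, sum_false_add_true, hp.2, one_div]

theorem bayesError_le (p : Bool × α → ℝ) (g : α → Bool) : bayesError p ≤ ∑ v, p (!g v, v) :=
  Finset.sum_le_sum fun v _ => by cases g v <;> simp

theorem exists_bayesError_eq (p : Bool × α → ℝ) :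
    ∃ g : α → Bool, bayesError p = ∑ v, p (!g v, v) := by
  refine ⟨fun v => decide (p (false, v) ≤ p (true, v)), Finset.sum_congr rfl fun v _ => ?_⟩
  by_cases h : p (false, v) ≤ p (true, v)
  · simp [h]
  · simp [h, (not_le.1 h).le]

end Entropy

section EmpiricalLaw

variable {ι α β : Type*} [DecidableEq α] [DecidableEq β]

/-- The empirical law of the family `f` over the finite index set `s`: the weight of `a` is the
proportion of indices in `s` at which `f` takes the value `a`, and `0` if `s` is empty. -/
noncomputable def empiricalLaw (s : Finset ι) (f : ι → α) (a : α) : ℝ :=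
  (s.filter fun i => f i = a).card / s.card

theorem empiricalLaw_mem_stdSimplex [Fintype α] {s : Finset ι} (hs : s.Nonempty) (f : ι → α) :
    empiricalLaw s f ∈ stdSimplex ℝ α := by
  refine ⟨fun a => by unfold empiricalLaw; positivity, ?_⟩
  simp only [empiricalLaw]
  rw [← Finset.sum_div, ← Nat.cast_sum,
    ← Finset.card_eq_sum_card_fiberwise fun _ _ => Finset.mem_coe.2 (Finset.mem_univ _),
    div_self (Nat.cast_ne_zero.2 hs.card_ne_zero)]

theorem empiricalLaw_comp_injective {e : α → β} (he : e.Injective) (s : Finset ι) (f : ι → α)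
    (a : α) : empiricalLaw s (fun i => e (f i)) (e a) = empiricalLaw s f a := by
  simp only [empiricalLaw, he.eq_iff]

theorem sum_empiricalLaw_prodMk [Fintype β] (s : Finset ι) (y : ι → β) (c : ι → α) (v : α) :
    ∑ b, empiricalLaw s (fun i => (y i, c i)) (b, v) = empiricalLaw s c v := by
  have fiberwise := Finset.card_eq_sum_card_fiberwise (s := s.filter fun i => c i = v) (f := y)
    (t := Finset.univ) fun _ _ => Finset.mem_coe.2 (Finset.mem_univ _)
  simp only [empiricalLaw, fiberwise, Finset.filter_filter, Prod.mk.injEq, and_comm, Nat.cast_sum,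
    Finset.sum_div]

theorem sum_empiricalLaw_not [Fintype α] (s : Finset ι) (y : ι → Bool) (c : ι → α)
    (g : α → Bool) : ∑ v, empiricalLaw s (fun i => (y i, c i)) (!g v, v) =
      (s.filter fun i => y i ≠ g (c i)).card / s.card := by
  have fiberwise := Finset.card_eq_sum_card_fiberwise (s := s.filter fun i => y i ≠ g (c i))
    (f := c) (t := Finset.univ) fun _ _ => Finset.mem_coe.2 (Finset.mem_univ _)
  have error_iff (i : ι) (v : α) : y i ≠ g (c i) ∧ c i = v ↔ y i = !g v ∧ c i = v := by
    rw [Bool.eq_not_iff]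
    exact and_congr_left fun h => by rw [h]
  simp only [empiricalLaw, fiberwise, Finset.filter_filter, Prod.mk.injEq, error_iff, Nat.cast_sum,
    Finset.sum_div]

theorem bayesError_empiricalLaw [Fintype α] (s : Finset ι) (y : ι → Bool) (c : ι → α) :
    bayesError (empiricalLaw s fun i => (y i, c i)) =
      (Finset.univ.inf' Finset.univ_nonempty fun g : α → Bool =>
        ((s.filter fun i => y i ≠ g (c i)).card : ℝ)) / s.card := by
  apply le_antisymm
  · obtain ⟨g, -, hg⟩ := Finset.exists_mem_eq_inf' Finset.univ_nonempty fun g : α → Bool =>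
      ((s.filter fun i => y i ≠ g (c i)).card : ℝ)
    rw [hg, ← sum_empiricalLaw_not]
    exact bayesError_le _ g
  · obtain ⟨g, hg⟩ := exists_bayesError_eq (empiricalLaw s fun i => (y i, c i))
    rw [hg, sum_empiricalLaw_not]
    gcongr
    exact Finset.inf'_le _ (Finset.mem_univ g)

theorem bayesError_empiricalLaw_le_comp [Fintype α] [Fintype β] (s : Finset ι) (y : ι → Bool)
    (c : ι → α) (π : α → β) :
    bayesError (empiricalLaw s fun i => (y i, c i)) ≤
      bayesError (empiricalLaw s fun i => (y i, π (c i))) := by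
  obtain ⟨g, hg⟩ := exists_bayesError_eq (empiricalLaw s fun i => (y i, π (c i)))
  rw [hg, sum_empiricalLaw_not, ← sum_empiricalLaw_not s y c fun v => g (π v)]
  exact bayesError_le _ _

theorem empiricalLaw_range_succ_sub (f : ℕ → α) (n : ℕ) (a : α) :
    empiricalLaw (Finset.range n) (fun i => f (i + 1)) a - empiricalLaw (Finset.range n) f a =
      ((if f n = a then 1 else 0) - if f 0 = a then 1 else 0) / n := by
  simp only [empiricalLaw, Finset.card_filter, Finset.card_range, Nat.cast_sum, Nat.cast_ite,
    Nat.cast_one, Nat.cast_zero]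
  rw [← sub_div, ← Finset.sum_sub_distrib,
    Finset.sum_range_sub fun i => if f i = a then (1 : ℝ) else 0]

theorem tendsto_empiricalLaw_range_succ_sub (f : ℕ → α) :
    Tendsto (fun n => empiricalLaw (Finset.range n) (fun i => f (i + 1)) -
      empiricalLaw (Finset.range n) f) atTop (𝓝 0) := by
  refine tendsto_pi_nhds.2 fun a => ?_
  simp only [Pi.sub_apply, empiricalLaw_range_succ_sub]
  refine tendsto_bdd_div_atTop_nhds_zero (b := -1) (B := 1) ?_ ?_ tendsto_natCast_atTop_atTop <;>
    refine Eventually.of_forall fun n => ?_ <;> split_ifs <;> norm_num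

end EmpiricalLaw

section Words

/-- The factor of length `ℓ` of `x` starting at position `i`, as a function on `Fin ℓ`. -/
def window (x : ℕ → Bool) (ℓ i : ℕ) : Fin ℓ → Bool :=
  fun j => x (i + j)

/-- The empirical law of the factors of length `ℓ` of `x` starting at the positions `0, …, n`;
these are the factors of length `ℓ` of `x[0:n+ℓ)`. -/
noncomputable def blockLaw (x : ℕ → Bool) (ℓ n : ℕ) : (Fin ℓ → Bool) → ℝ :=
  empiricalLaw (Finset.range (n + 1)) (window x ℓ)

/-- The joint empirical law of the symbol of `x` at position `i` and the `ℓ` symbols following it,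
for `i = 0, …, n`. -/
noncomputable def nextLaw (x : ℕ → Bool) (ℓ n : ℕ) : Bool × (Fin ℓ → Bool) → ℝ :=
  empiricalLaw (Finset.range (n + 1)) fun i => (x i, window x ℓ (i + 1))

variable (x : ℕ → Bool) (ℓ : ℕ)

theorem window_succ (i : ℕ) : window x (ℓ + 1) i = Fin.cons (x i) (window x ℓ (i + 1)) := by
  ext j
  cases j using Fin.cases <;> simp [window, add_assoc, add_comm 1]

theorem blockLaw_mem_stdSimplex (n : ℕ) : blockLaw x ℓ n ∈ stdSimplex ℝ (Fin ℓ → Bool) :=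
  empiricalLaw_mem_stdSimplex Finset.nonempty_range_add_one _

theorem nextLaw_mem_stdSimplex (n : ℕ) :
    nextLaw x ℓ n ∈ stdSimplex ℝ (Bool × (Fin ℓ → Bool)) :=
  empiricalLaw_mem_stdSimplex Finset.nonempty_range_add_one _

theorem bayesError_nextLaw_mem_Icc (n : ℕ) : bayesError (nextLaw x ℓ n) ∈ Set.Icc 0 2⁻¹ :=
  bayesError_mem_Icc (nextLaw_mem_stdSimplex x ℓ n)

theorem antitone_bayesError_nextLaw (n : ℕ) : Antitone fun ℓ => bayesError (nextLaw x ℓ n) :=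
  antitone_nat_of_succ_le fun ℓ =>
    bayesError_empiricalLaw_le_comp _ _ (fun i => window x (ℓ + 1) (i + 1)) Fin.init

theorem betaWord_add (n : ℕ) : betaWord ℓ x (n + 1 + ℓ) = bayesError (nextLaw x ℓ n) := by
  rw [nextLaw, bayesError_empiricalLaw, betaWord, Nat.add_sub_cancel, Finset.card_range]
  push_cast
  rw [add_sub_cancel_right, one_div_mul_eq_div]
  rfl

theorem occ_ofFn_add (n : ℕ) (u : Fin ℓ → Bool) :
    occ x (n + ℓ) (List.ofFn u) =
      ((Finset.range (n + 1)).filter fun i => window x ℓ i = u).card := by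
  have factor_eq_iff (i : ℕ) : factor x i ℓ = List.ofFn u ↔ window x ℓ i = u :=
    List.ofFn_injective.eq_iff
  simp only [occ, List.length_ofFn, factor_eq_iff, add_right_comm n ℓ 1, Nat.add_sub_cancel]

theorem hBlock_add (n : ℕ) : hBlock ℓ x (n + ℓ) = shannonEntropy (blockLaw x ℓ n) / ℓ := by
  have freq_eq (u : Fin ℓ → Bool) :
      (occ x (n + ℓ) (List.ofFn u) : ℝ) / (((n + ℓ : ℕ) : ℝ) - ℓ + 1) = blockLaw x ℓ n u := by
    rw [occ_ofFn_add, blockLaw, empiricalLaw, Finset.card_range]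
    push_cast
    ring
  simp only [hBlock, freq_eq, shannonEntropy, Real.negMulLog, Real.logb, Finset.sum_div,
    Finset.mul_sum]
  exact Finset.sum_congr rfl fun u _ => by ring

theorem shannonEntropy_blockLaw_succ (n : ℕ) :
    shannonEntropy (blockLaw x (ℓ + 1) n) = condEntropyFst (nextLaw x ℓ n) +
      shannonEntropy (empiricalLaw (Finset.range (n + 1)) fun i => window x ℓ (i + 1)) := by
  let e := Fin.consEquiv fun _ : Fin (ℓ + 1) => Bool
  have relabel (a : Bool × (Fin ℓ → Bool)) : blockLaw x (ℓ + 1) n (e a) = nextLaw x ℓ n a := by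
    rw [blockLaw, funext (window_succ x ℓ)]
    exact empiricalLaw_comp_injective e.injective _ (fun i => (x i, window x ℓ (i + 1))) a
  have marginal : (fun v => ∑ b, nextLaw x ℓ n (b, v)) =
      empiricalLaw (Finset.range (n + 1)) fun i => window x ℓ (i + 1) :=
    funext fun v => sum_empiricalLaw_prodMk _ _ _ v
  rw [condEntropyFst, marginal, sub_add_cancel, ← shannonEntropy_comp_equiv e, funext relabel]

theorem tendsto_shannonEntropy_shift_sub :
    Tendsto (fun n => shannonEntropy (empiricalLaw (Finset.range (n + 1))
      fun i => window x ℓ (i + 1)) - shannonEntropy (blockLaw x ℓ n)) atTop (𝓝 0) :=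
  tendsto_sub_zero_of_continuousOn_of_isCompact continuous_shannonEntropy.continuousOn
    (isCompact_stdSimplex ℝ (Fin ℓ → Bool))
    (Eventually.of_forall fun _ => empiricalLaw_mem_stdSimplex Finset.nonempty_range_add_one _)
    (Eventually.of_forall (blockLaw_mem_stdSimplex x ℓ))
    ((tendsto_empiricalLaw_range_succ_sub (window x ℓ)).comp (tendsto_add_atTop_nat 1))

theorem tendsto_shannonEntropy_blockLaw_sub_sum :
    Tendsto (fun n => shannonEntropy (blockLaw x ℓ n) -
      ∑ k ∈ Finset.range ℓ, condEntropyFst (nextLaw x k n)) atTop (𝓝 0) := by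
  induction ℓ with
  | zero =>
    simp [shannonEntropy_eq_zero_of_unique (blockLaw_mem_stdSimplex x 0 _)]
  | succ ℓ ih =>
    have step := (tendsto_shannonEntropy_shift_sub x ℓ).add ih
    rw [add_zero] at step
    refine step.congr fun n => ?_
    rw [shannonEntropy_blockLaw_succ, Finset.sum_range_succ]
    ring

end Words

section MeanCondEntropy

/-- The mean over `k < ℓ` of the empirical conditional entropies of a symbol of `x` given the `k`
symbols following it; the chain rule makes it asymptotically equal to `hBlock ℓ x n`. -/
noncomputable def meanCondEntropy (x : ℕ → Bool) (ℓ n : ℕ) : ℝ :=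
  (∑ k ∈ Finset.range ℓ, condEntropyFst (nextLaw x k n)) / ℓ

variable (x : ℕ → Bool)

theorem two_mul_bayesError_le_meanCondEntropy {ℓ : ℕ} (hℓ : 0 < ℓ) (n : ℕ) :
    2 * bayesError (nextLaw x ℓ n) ≤ meanCondEntropy x ℓ n := by
  rw [meanCondEntropy, le_div_iff₀' (by positivity)]
  have term_le (k : ℕ) (hk : k ∈ Finset.range ℓ) :
      2 * bayesError (nextLaw x ℓ n) ≤ condEntropyFst (nextLaw x k n) :=
    (mul_le_mul_of_nonneg_left (antitone_bayesError_nextLaw x n (Finset.mem_range.1 hk).le)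
      zero_le_two).trans (two_mul_bayesError_le_condEntropyFst (nextLaw_mem_stdSimplex x k n).1)
  simpa using Finset.card_nsmul_le_sum _ _ _ term_le

theorem condEntropyFst_nextLaw_le (k m n : ℕ) : condEntropyFst (nextLaw x k n) ≤
    (if k < m then 1 else 0) + binEntropy (bayesError (nextLaw x m n)) := by
  have fano := condEntropyFst_le_binEntropy_bayesError (nextLaw_mem_stdSimplex x k n)
  have hm := bayesError_nextLaw_mem_Icc x m n
  split_ifs with h
  · have := binEntropy_nonneg (Set.Icc_subset_Icc_right (by norm_num) hm)
    linarith [binEntropy_le_one (bayesError (nextLaw x k n))]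
  · rw [zero_add]
    exact fano.trans (monotoneOn_binEntropy (bayesError_nextLaw_mem_Icc x k n) hm
      (antitone_bayesError_nextLaw x n (not_lt.1 h)))

theorem meanCondEntropy_le {ℓ : ℕ} (hℓ : 0 < ℓ) (m n : ℕ) :
    meanCondEntropy x ℓ n ≤ m / ℓ + binEntropy (bayesError (nextLaw x m n)) := by
  have card_le : (((Finset.range ℓ).filter (· < m)).card : ℝ) ≤ m := by
    have subset : (Finset.range ℓ).filter (· < m) ⊆ Finset.range m := fun k hk =>
      Finset.mem_range.2 (Finset.mem_filter.1 hk).2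
    exact_mod_cast (Finset.card_le_card subset).trans_eq (Finset.card_range m)
  rw [meanCondEntropy, div_add' _ _ _ (by positivity)]
  gcongr
  calc ∑ k ∈ Finset.range ℓ, condEntropyFst (nextLaw x k n)
      ≤ ∑ k ∈ Finset.range ℓ,
          ((if k < m then 1 else 0) + binEntropy (bayesError (nextLaw x m n))) :=
        Finset.sum_le_sum fun k _ => condEntropyFst_nextLaw_le x k m n
    _ = ((Finset.range ℓ).filter (· < m)).card + binEntropy (bayesError (nextLaw x m n)) * ℓ := by
        simp [Finset.sum_add_distrib, mul_comm]
    _ ≤ m + binEntropy (bayesError (nextLaw x m n)) * ℓ := by gcongr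

theorem meanCondEntropy_mem_Icc (ℓ n : ℕ) : meanCondEntropy x ℓ n ∈ Set.Icc 0 1 := by
  rcases ℓ.eq_zero_or_pos with rfl | hℓ
  · simp [meanCondEntropy]
  have lower := two_mul_bayesError_le_meanCondEntropy x hℓ n
  have upper := meanCondEntropy_le x hℓ 0 n
  rw [Nat.cast_zero, zero_div, zero_add] at upper
  exact ⟨by linarith [(bayesError_nextLaw_mem_Icc x ℓ n).1], upper.trans (binEntropy_le_one _)⟩

end MeanCondEntropy

section LowerLimits

/-- The quantity `β̲_ℓ(x)`, the lower limit of `β_ℓ` along the prefixes of `x`. -/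
noncomputable def lowerBeta (x : ℕ → Bool) (ℓ : ℕ) : ℝ :=
  atTop.liminf fun n => betaWord ℓ x n

/-- The lower limit of the `ℓ`-block entropy `h_ℓ` along the prefixes of `x`. -/
noncomputable def lowerBlockEntropy (x : ℕ → Bool) (ℓ : ℕ) : ℝ :=
  atTop.liminf fun n => hBlock ℓ x n

variable (x : ℕ → Bool)

theorem lowerBeta_eq_liminf_bayesError (ℓ : ℕ) :
    lowerBeta x ℓ = atTop.liminf fun n => bayesError (nextLaw x ℓ n) := by
  rw [lowerBeta, ← liminf_nat_add _ (1 + ℓ)]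
  simp only [← add_assoc, betaWord_add]

theorem lowerBlockEntropy_eq_liminf_meanCondEntropy (ℓ : ℕ) :
    lowerBlockEntropy x ℓ = atTop.liminf (meanCondEntropy x ℓ) := by
  rw [lowerBlockEntropy, ← liminf_nat_add _ ℓ]
  simp only [hBlock_add]
  refine liminf_eq_of_tendsto_sub_zero (Eventually.of_forall (meanCondEntropy_mem_Icc x ℓ)) ?_
  simpa only [meanCondEntropy, sub_div, zero_div] using
    (tendsto_shannonEntropy_blockLaw_sub_sum x ℓ).div_const (ℓ : ℝ)

theorem lowerBeta_mem_Icc (ℓ : ℕ) : lowerBeta x ℓ ∈ Set.Icc 0 2⁻¹ := by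
  rw [lowerBeta_eq_liminf_bayesError]
  exact liminf_mem_Icc (Eventually.of_forall (bayesError_nextLaw_mem_Icc x ℓ))

theorem lowerBlockEntropy_mem_Icc (ℓ : ℕ) : lowerBlockEntropy x ℓ ∈ Set.Icc 0 1 := by
  rw [lowerBlockEntropy_eq_liminf_meanCondEntropy]
  exact liminf_mem_Icc (Eventually.of_forall (meanCondEntropy_mem_Icc x ℓ))

theorem antitone_lowerBeta : Antitone (lowerBeta x) := by
  intro ℓ ℓ' h
  rw [lowerBeta_eq_liminf_bayesError, lowerBeta_eq_liminf_bayesError]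
  exact liminf_le_liminf (Eventually.of_forall fun n => antitone_bayesError_nextLaw x n h)
    (isBoundedUnder_ge_of_mem_Icc (Eventually.of_forall (bayesError_nextLaw_mem_Icc x ℓ')))
    (isCoboundedUnder_ge_of_mem_Icc (Eventually.of_forall (bayesError_nextLaw_mem_Icc x ℓ)))

theorem tendsto_lowerBeta : Tendsto (lowerBeta x) atTop (𝓝 (betaLow x)) := by
  have h := tendsto_atTop_ciInf (antitone_lowerBeta x)
    ⟨0, Set.forall_mem_range.2 fun ℓ => (lowerBeta_mem_Icc x ℓ).1⟩
  have betaLow_eq : betaLow x = ⨅ ℓ, lowerBeta x ℓ := h.liminf_eq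
  rwa [betaLow_eq]

theorem two_mul_lowerBeta_le_lowerBlockEntropy {ℓ : ℕ} (hℓ : 0 < ℓ) :
    2 * lowerBeta x ℓ ≤ lowerBlockEntropy x ℓ := by
  have hB : ∀ᶠ n in atTop, bayesError (nextLaw x ℓ n) ∈ Set.Icc 0 2⁻¹ :=
    Eventually.of_forall (bayesError_nextLaw_mem_Icc x ℓ)
  have two_mul_monotone : Monotone fun t : ℝ => 2 * t := monotone_mul_left_of_nonneg zero_le_two
  rw [lowerBeta_eq_liminf_bayesError, lowerBlockEntropy_eq_liminf_meanCondEntropy,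
    map_liminf_of_monotoneOn_Icc (two_mul_monotone.monotoneOn _) (by fun_prop) hB]
  exact liminf_le_liminf
    (Eventually.of_forall (two_mul_bayesError_le_meanCondEntropy x hℓ))
    (isBoundedUnder_of_eventually_ge (a := 0) (hB.mono fun n h => mul_nonneg zero_le_two h.1))
    (isCoboundedUnder_ge_of_mem_Icc (Eventually.of_forall (meanCondEntropy_mem_Icc x ℓ)))

theorem lowerBlockEntropy_le {ℓ : ℕ} (hℓ : 0 < ℓ) (m : ℕ) :
    lowerBlockEntropy x ℓ ≤ m / ℓ + binEntropy (lowerBeta x m) := by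
  have hB : ∀ᶠ n in atTop, bayesError (nextLaw x m n) ∈ Set.Icc 0 2⁻¹ :=
    Eventually.of_forall (bayesError_nextLaw_mem_Icc x m)
  rw [lowerBeta_eq_liminf_bayesError, lowerBlockEntropy_eq_liminf_meanCondEntropy,
    map_liminf_of_monotoneOn_Icc (monotoneOn_binEntropy.const_add (m / ℓ : ℝ))
      (continuous_binEntropy.const_add _).continuousOn hB]
  exact liminf_le_liminf (Eventually.of_forall (meanCondEntropy_le x hℓ m))
    (isBoundedUnder_ge_of_mem_Icc (Eventually.of_forall (meanCondEntropy_mem_Icc x ℓ)))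
    (isCoboundedUnder_ge_of_eventually_le atTop
      (Eventually.of_forall fun n => add_le_add_right (binEntropy_le_one _) _))

theorem hLow_le_binEntropy_lowerBeta (m : ℕ) : hLow x ≤ binEntropy (lowerBeta x m) := by
  have bound_tendsto : Tendsto (fun ℓ : ℕ => (m : ℝ) / ℓ + binEntropy (lowerBeta x m)) atTop
      (𝓝 (binEntropy (lowerBeta x m))) := by
    simpa using (tendsto_const_div_atTop_nhds_zero_nat (m : ℝ)).add_const _
  calc hLow x ≤ atTop.liminf fun ℓ : ℕ => (m : ℝ) / ℓ + binEntropy (lowerBeta x m) :=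
        liminf_le_liminf
          ((eventually_gt_atTop 0).mono fun ℓ hℓ => lowerBlockEntropy_le x hℓ m)
          (isBoundedUnder_ge_of_mem_Icc (Eventually.of_forall (lowerBlockEntropy_mem_Icc x)))
          bound_tendsto.isCoboundedUnder_ge
    _ = binEntropy (lowerBeta x m) := bound_tendsto.liminf_eq

end LowerLimits

theorem rauzy_lower_beta_liminf (x : ℕ → Bool) :
    2 * betaLow x ≤ hLow x ∧ hLow x ≤ binEntropy (betaLow x) := by
  have hβ := tendsto_lowerBeta x
  constructor
  · refine le_liminf_of_le
      (isCoboundedUnder_ge_of_mem_Icc (Eventually.of_forall (lowerBlockEntropy_mem_Icc x))) ?_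
    filter_upwards [eventually_gt_atTop 0] with ℓ hℓ
    calc 2 * betaLow x ≤ 2 * lowerBeta x ℓ := by
          gcongr
          exact (antitone_lowerBeta x).le_of_tendsto hβ ℓ
      _ ≤ lowerBlockEntropy x ℓ := two_mul_lowerBeta_le_lowerBlockEntropy x hℓ
  · exact ge_of_tendsto' ((continuous_binEntropy.tendsto _).comp hβ)
      (hLow_le_binEntropy_lowerBeta x)
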